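/- For every x ∈ ℝ ∖ {0}, the function u defined by u(t, x) = F_p(t, Δ(t, x)) for x > 0 and u(t, x) = −F_p(t, Δ(t, −x)) for x < 0 satisfies lim_{t → +∞} u(t, x) = −sgn(x) √(2(1 − g(x))); explicitly, the limit equals −sgn(x) √2 (1 − x²)² if |x| ≤ 1 and equals 0 if |x| > 1. -/

import Mathlib

open Real Set Filter MeasureTheory
open scoped Topology

/-- The potential `g` from the Hamiltonian `H(x,p) = p²/2 + g(x)`. -/
noncomputable def g (x : ℝ) : ℝ := if |x| ≤ 1 then 1 - (1 - x ^ 2) ^ 4 else 1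

/-- The derivative of `g`. -/
noncomputable def g' (x : ℝ) : ℝ := if |x| ≤ 1 then 8 * x * (1 - x ^ 2) ^ 3 else 0

/-- `(q, p)` is a (global) solution of the Hamiltonian system (HS): `q̇ = p`, `ṗ = -g'(q)`. -/
def IsHSSol (q p : ℝ → ℝ) : Prop :=
  (∀ t : ℝ, HasDerivAt q (p t) t) ∧ (∀ t : ℝ, HasDerivAt p (-(g' (q t))) t)

/-- `F` is the flow of (HS): `F t q₀ p₀ = (q t, p t)` for the solution with data `(q₀, p₀)`. -/
def IsHSFlow (F : ℝ → ℝ → ℝ → ℝ × ℝ) : Prop :=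
  ∀ q₀ p₀ : ℝ,
    IsHSSol (fun t => (F t q₀ p₀).1) (fun t => (F t q₀ p₀).2) ∧ F 0 q₀ p₀ = (q₀, p₀)

/-- The set `([0,∞) × {2}) ∪ ({0} × (0,2])`, codomain of the map `Δ`. -/
def Dset : Set (ℝ × ℝ) := (Ici (0:ℝ) ×ˢ ({2} : Set ℝ)) ∪ ({(0:ℝ)} ×ˢ Ioc (0:ℝ) 2)

/-- `T` is the smallest positive period of `q`. -/
def IsSmallestPeriod (q : ℝ → ℝ) (T : ℝ) : Prop :=
  0 < T ∧ Function.Periodic q T ∧ ∀ T' : ℝ, 0 < T' → Function.Periodic q T' → T ≤ T'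

/-- `T` is the period map `𝒯`, assigning to `p₀ ∈ (0, √2)` the smallest positive period of
the `q`-component of the solution of (HS) with initial datum `(0, p₀)`. -/
def IsPeriodMap (F : ℝ → ℝ → ℝ → ℝ × ℝ) (T : ℝ → ℝ) : Prop :=
  ∀ p₀ ∈ Ioo (0:ℝ) (Real.sqrt 2), IsSmallestPeriod (fun t => (F t 0 p₀).1) (T p₀)

/-- `Δ` associates to `(t,x)` the datum in `Dset` whose orbit stays positive on `(0,t)`
and reaches `x` at time `t`. -/
def IsDeltaMap (F : ℝ → ℝ → ℝ → ℝ × ℝ) (Δ : ℝ → ℝ → ℝ × ℝ) : Prop :=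
  ∀ t x : ℝ, 0 < t → 0 < x →
    Δ t x ∈ Dset ∧ (F t (Δ t x).1 (Δ t x).2).1 = x ∧
      ∀ s ∈ Ioo (0:ℝ) t, 0 < (F s (Δ t x).1 (Δ t x).2).1

/-- The solution `u` of the conservation law built from the flow `F` and the map `Δ`
(extended by `0` at `x = 0`). -/
noncomputable def usol (F : ℝ → ℝ → ℝ → ℝ × ℝ) (Δ : ℝ → ℝ → ℝ × ℝ) (t x : ℝ) : ℝ :=
  if 0 < x then (F t (Δ t x).1 (Δ t x).2).2
  else if x < 0 then -(F t (Δ t (-x)).1 (Δ t (-x)).2).2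
  else 0

lemma g_eq (x : ℝ) : g x = 1 - (max (1 - x ^ 2) 0) ^ 4 := by
  unfold g
  split_ifs with h
  · rw [max_eq_left]
    have := (sq_le_one_iff_abs_le_one x).2 h
    linarith
  · rw [max_eq_right]
    · norm_num
    · have : ¬ x ^ 2 ≤ 1 := fun h' => h ((sq_le_one_iff_abs_le_one x).1 h')
      linarith

lemma g'_eq (x : ℝ) : g' x = 8 * x * (max (1 - x ^ 2) 0) ^ 3 := by
  unfold g'
  split_ifs with h
  · rw [max_eq_left]
    have := (sq_le_one_iff_abs_le_one x).2 h
    linarith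
  · rw [max_eq_right]
    · norm_num
    · have : ¬ x ^ 2 ≤ 1 := fun h' => h ((sq_le_one_iff_abs_le_one x).1 h')
      linarith

lemma max_deriv (y : ℝ) :
    HasDerivAt (fun y : ℝ => (max y 0) ^ 4) (4 * (max y 0) ^ 3) y := by
  refine hasDerivAt_of_hasDerivAt_of_ne' (x := 0) (f := fun y : ℝ => (max y 0) ^ 4)
    (g := fun y : ℝ => 4 * (max y 0) ^ 3) ?_ ?_ ?_ y
  · intro z hz
    rcases lt_or_gt_of_ne hz with h | h
    · have e : (fun y : ℝ => (max y 0) ^ 4) =ᶠ[𝓝 z] fun _ => 0 := by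
        filter_upwards [Iio_mem_nhds h] with w hw
        rw [max_eq_right (le_of_lt hw)]; norm_num
      rw [max_eq_right h.le]
      simpa using (hasDerivAt_const z (0:ℝ)).congr_of_eventuallyEq e
    · have e : (fun y : ℝ => (max y 0) ^ 4) =ᶠ[𝓝 z] fun y => y ^ 4 := by
        filter_upwards [Ioi_mem_nhds h] with w hw
        rw [max_eq_left (le_of_lt hw)]
      rw [max_eq_left h.le]
      simpa using (hasDerivAt_pow 4 z).congr_of_eventuallyEq e
  · fun_prop
  · fun_prop

lemma g_deriv (x : ℝ) : HasDerivAt g (g' x) x := by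
  have h1 : HasDerivAt (fun x : ℝ => 1 - x ^ 2) (-(2 * x)) x := by
    simpa using (hasDerivAt_pow 2 x).const_sub 1
  have h2 := (HasDerivAt.comp x (max_deriv (1 - x ^ 2)) h1).const_sub 1
  have e : g = fun x => 1 - ((fun y : ℝ => (max y 0) ^ 4) ∘ (fun x : ℝ => 1 - x ^ 2)) x := by
    funext x; simp [g_eq]
  rw [e, g'_eq]
  refine h2.congr_deriv ?_
  ring

lemma g_le (x : ℝ) : g x ≤ 1 := by rw [g_eq]; have : 0 ≤ (max (1 - x ^ 2) 0) ^ 4 := by positivity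
                                   linarith
lemma gmax_le (x : ℝ) : 0 ≤ max (1 - x ^ 2) 0 ∧ max (1 - x ^ 2) 0 ≤ 1 :=
  ⟨le_max_right _ _, by simp [sq_nonneg]⟩
lemma g_nonneg (x : ℝ) : 0 ≤ g x := by
  rw [g_eq]; have := pow_le_one₀ (n := 4) (gmax_le x).1 (gmax_le x).2
  linarith
lemma g'_nonneg (x : ℝ) (hx : 0 ≤ x) : 0 ≤ g' x := by
  rw [g'_eq]; have := (gmax_le x).1; positivity

/-- lower bound of the force in terms of the potential -/
lemma g'_ge (x : ℝ) (hx : 0 ≤ x) : 8 * x * (1 - g x) ≤ g' x := by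
  rw [g'_eq, g_eq]
  have h := gmax_le x
  have : (max (1 - x ^ 2) 0) ^ 4 ≤ (max (1 - x ^ 2) 0) ^ 3 :=
    pow_le_pow_of_le_one h.1 h.2 (by norm_num)
  have := mul_le_mul_of_nonneg_left this (by positivity : 0 ≤ 8 * x)
  linarith

lemma g_mono {x y : ℝ} (hx : 0 ≤ x) (hxy : x ≤ y) : g x ≤ g y := by
  have hm : MonotoneOn g (Ici 0) := by
    refine monotoneOn_of_deriv_nonneg (convex_Ici 0)
      (fun z _ => (g_deriv z).continuousAt.continuousWithinAt)
      (fun z _ => (g_deriv z).differentiableAt.differentiableWithinAt) ?_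
    intro z hz
    rw [interior_Ici] at hz
    rw [(g_deriv z).deriv]
    exact g'_nonneg z (le_of_lt hz)
  exact hm hx (le_trans hx hxy) hxy

lemma energy {q p : ℝ → ℝ} (h : IsHSSol q p) (s : ℝ) :
    p s ^ 2 / 2 + g (q s) = p 0 ^ 2 / 2 + g (q 0) := by
  have hd : ∀ s, HasDerivAt (fun s => p s ^ 2 / 2 + g (q s)) 0 s := by
    intro s
    have h1 := ((h.2 s).pow 2).div_const 2
    have h2 := (g_deriv (q s)).comp s (h.1 s)
    refine (h1.add h2).congr_deriv ?_
    push_cast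
    ring
  exact is_const_of_deriv_eq_zero (fun s => (hd s).differentiableAt) (fun s => (hd s).deriv) s 0

lemma p_anti {q p : ℝ → ℝ} (h : IsHSSol q p) {t : ℝ} (hq : ∀ s ∈ Ioo 0 t, 0 < q s) :
    AntitoneOn p (Icc 0 t) := by
  refine antitoneOn_of_deriv_nonpos (convex_Icc 0 t)
    (fun z _ => (h.2 z).continuousAt.continuousWithinAt)
    (fun z _ => (h.2 z).differentiableAt.differentiableWithinAt) ?_
  intro z hz
  rw [interior_Icc] at hz
  rw [(h.2 z).deriv]
  have := g'_nonneg _ (hq z hz).le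
  linarith

lemma q_half {q p : ℝ → ℝ} (h : IsHSSol q p) {t : ℝ} (ht : 0 < t)
    (hq : ∀ s ∈ Ioo 0 t, 0 < q s) (h0 : 0 ≤ q 0) (hx : 0 < q t) :
    ∀ s ∈ Icc (t / 2) t, q t / 2 ≤ q s := by
  have hd : deriv q = p := funext fun s => (h.1 s).deriv
  have hc : ConcaveOn ℝ (Icc 0 t) q := by
    refine AntitoneOn.concaveOn_of_deriv (convex_Icc 0 t)
      (fun z _ => (h.1 z).continuousAt.continuousWithinAt)
      (fun z _ => (h.1 z).differentiableAt.differentiableWithinAt) ?_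
    rw [hd, interior_Icc]
    exact (p_anti h hq).mono Ioo_subset_Icc_self
  intro s hs
  have hst : s / t ≤ 1 := by rw [div_le_one ht]; exact hs.2
  have hst2 : 1 / 2 ≤ s / t := by rw [le_div_iff₀ ht]; linarith [hs.1]
  have := hc.2 (left_mem_Icc.2 ht.le) (right_mem_Icc.2 ht.le)
    (by linarith : 0 ≤ 1 - s / t) (by linarith : 0 ≤ s / t) (by ring)
  simp only [smul_eq_mul, mul_zero, zero_add] at this
  rw [div_mul_cancel₀ _ ht.ne'] at this
  nlinarith [mul_nonneg (by linarith : 0 ≤ 1 - s / t) h0]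

lemma p_drop {q p : ℝ → ℝ} (h : IsHSSol q p) {t m : ℝ} (ht : 0 < t)
    (hq : ∀ s ∈ Ioo 0 t, 0 < q s) (hm : ∀ s ∈ Icc (t / 2) t, m ≤ g' (q s)) :
    p t ≤ p 0 - m * (t / 2) := by
  have h1 : p (t / 2) ≤ p 0 := p_anti h hq ⟨le_rfl, ht.le⟩ ⟨by linarith, by linarith⟩ (by linarith)
  have h2 := Convex.image_sub_le_mul_sub_of_deriv_le (convex_Icc (t / 2) t) (f := p)
    (fun z _ => (h.2 z).continuousAt.continuousWithinAt)
    (fun z _ => (h.2 z).differentiableAt.differentiableWithinAt) (C := -m) (by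
      intro z hz
      rw [(h.2 z).deriv]
      linarith [hm z (interior_subset hz)])
    (t / 2) ⟨le_rfl, by linarith⟩ t ⟨by linarith, le_rfl⟩ (by linarith)
  linarith

/-- energies above `1`: short times only -/
lemma time_high {q p : ℝ → ℝ} (h : IsHSSol q p) {t e : ℝ} (he : 0 < e) (ht : 0 < t)
    (h0 : 0 ≤ q 0) (hp : 0 < p 0) (hE : 1 + e ≤ p 0 ^ 2 / 2 + g (q 0)) :
    √(2 * e) * t ≤ q t := by
  have hsq : ∀ s, 2 * e ≤ p s ^ 2 := fun s => by
    have := energy h s; have := g_le (q s); linarith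
  have hpc : Continuous p := continuous_iff_continuousAt.2 fun s => (h.2 s).continuousAt
  have hpos : ∀ s, 0 < p s := by
    intro s
    by_contra hn
    have : (0:ℝ) ∈ Set.range p :=
      mem_range_of_exists_le_of_exists_ge hpc ⟨s, not_lt.1 hn⟩ ⟨0, hp.le⟩
    obtain ⟨r, hr⟩ := this
    have := hsq r
    rw [hr] at this
    linarith
  have hge : ∀ s, √(2 * e) ≤ p s := fun s => Real.sqrt_le_iff.2 ⟨(hpos s).le, hsq s⟩
  have := mul_sub_le_image_sub_of_le_deriv (f := q) (fun s => (h.1 s).differentiableAt)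
    (C := √(2 * e)) (fun s => by rw [(h.1 s).deriv]; exact hge s) ht.le
  linarith

/-- energies below `1`: short times only -/
lemma time_low {q p : ℝ → ℝ} (h : IsHSSol q p) {t e : ℝ} (he : 0 < e) (ht : 0 < t)
    (hq : ∀ s ∈ Ioo 0 t, 0 < q s) (h0 : 0 ≤ q 0) (hx : 0 < q t) (hp : 0 < p 0) (hp2 : p 0 ≤ 2)
    (hE : p 0 ^ 2 / 2 + g (q 0) ≤ 1 - e) :
    e * q t * t ≤ 2 := by
  have hm : ∀ s ∈ Icc (t / 2) t, 4 * q t * e ≤ g' (q s) := by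
    intro s hs
    have h1 := q_half h ht hq h0 hx s hs
    have h2 := g'_ge (q s) (by linarith)
    have h3 := energy h s
    have h4 : e ≤ 1 - g (q s) := by nlinarith [sq_nonneg (p s)]
    nlinarith [mul_le_mul h1 h4 he.le (by linarith)]
  have h1 := p_drop h ht hq hm
  have h2 := energy h t
  have : -2 ≤ p t := by nlinarith [g_nonneg (q t)]
  nlinarith

/-- for `q t < 1` and large times the momentum is negative -/
lemma time_neg {q p : ℝ → ℝ} (h : IsHSSol q p) {t : ℝ} (ht : 0 < t)
    (hq : ∀ s ∈ Ioo 0 t, 0 < q s) (h0 : 0 ≤ q 0) (hx : 0 < q t) (hp2 : p 0 ≤ 2)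
    (hpt : 0 ≤ p t) : q t * (1 - g (q t)) * t ≤ 1 := by
  have hmono : MonotoneOn q (Icc 0 t) := by
    refine monotoneOn_of_deriv_nonneg (convex_Icc 0 t)
      (fun z _ => (h.1 z).continuousAt.continuousWithinAt)
      (fun z _ => (h.1 z).differentiableAt.differentiableWithinAt) ?_
    intro z hz
    have hz := interior_subset hz
    rw [(h.1 z).deriv]
    exact hpt.trans (p_anti h hq hz (right_mem_Icc.2 ht.le) hz.2)
  have hm : ∀ s ∈ Icc (t / 2) t, 4 * q t * (1 - g (q t)) ≤ g' (q s) := by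
    intro s hs
    have h1 := q_half h ht hq h0 hx s hs
    have h2 := g'_ge (q s) (by linarith)
    have h3 : g (q s) ≤ g (q t) := g_mono (by linarith)
      (hmono ⟨by linarith [hs.1], hs.2⟩ (right_mem_Icc.2 ht.le) hs.2)
    nlinarith [mul_le_mul h1 (by linarith : 1 - g (q t) ≤ 1 - g (q s)) (by linarith [g_le (q t)])
      (by linarith)]
  have h1 := p_drop h ht hq hm
  nlinarith

lemma main_pos (F : ℝ → ℝ → ℝ → ℝ × ℝ) (hF : IsHSFlow F)
    (Δ : ℝ → ℝ → ℝ × ℝ) (hΔ : IsDeltaMap F Δ) (x : ℝ) (hx : 0 < x) :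
    Tendsto (fun t => (F t (Δ t x).1 (Δ t x).2).2) atTop (𝓝 (-√(2 * (1 - g x)))) := by
  set P : ℝ → ℝ := fun t => (F t (Δ t x).1 (Δ t x).2).2 with hP
  -- the basic facts about the trajectories
  have key : ∀ t, 0 < t → ∃ q p : ℝ → ℝ, IsHSSol q p ∧ q t = x ∧ p t = P t ∧ 0 ≤ q 0 ∧
      0 < p 0 ∧ p 0 ≤ 2 ∧ ∀ s ∈ Ioo 0 t, 0 < q s := by
    intro t ht
    obtain ⟨h1, h2, h3⟩ := hΔ t x ht hx
    obtain ⟨h4, h5⟩ := hF (Δ t x).1 (Δ t x).2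
    refine ⟨_, _, h4, h2, rfl, ?_⟩
    simp only [h5]
    rcases h1 with ⟨h, h'⟩ | ⟨h, h'⟩
    · simp only [mem_Ici, mem_singleton_iff] at h h'
      exact ⟨h, by rw [h']; norm_num, by rw [h'], h3⟩
    · simp only [mem_Ioc, mem_singleton_iff] at h h'
      exact ⟨h.ge, h'.1, h'.2, h3⟩
  have hE : Tendsto (fun t => P t ^ 2 / 2 + g x) atTop (𝓝 1) := by
    rw [tendsto_order]
    constructor
    · intro a ha
      filter_upwards [eventually_gt_atTop 0, eventually_gt_atTop (2 / ((1 - a) * x))] with t ht ht2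
      obtain ⟨q, p, hs, hqt, hpt, hq0, hp0, hp2, hq⟩ := key t ht
      by_contra hn
      have e := energy hs t
      rw [hqt, hpt] at e
      have := time_low hs (sub_pos.2 ha) ht hq hq0 (hqt ▸ hx) hp0 hp2 (by linarith)
      rw [div_lt_iff₀ (mul_pos (sub_pos.2 ha) hx)] at ht2
      rw [hqt] at this
      linarith
    · intro a ha
      have hs0 : 0 < √(2 * (a - 1)) := Real.sqrt_pos.2 (by linarith)
      filter_upwards [eventually_gt_atTop 0, eventually_gt_atTop (x / √(2 * (a - 1)))] with t ht ht2
      obtain ⟨q, p, hs, hqt, hpt, hq0, hp0, hp2, hq⟩ := key t ht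
      by_contra hn
      have e := energy hs t
      rw [hqt, hpt] at e
      have := time_high hs (sub_pos.2 ha) ht hq0 hp0 (by linarith)
      rw [div_lt_iff₀ hs0] at ht2
      rw [hqt] at this
      linarith
  have habs : Tendsto (fun t => |P t|) atTop (𝓝 (√(2 * (1 - g x)))) := by
    have := ((hE.sub_const (g x)).const_mul 2).sqrt
    refine this.congr fun t => ?_
    rw [← Real.sqrt_sq_eq_abs]
    congr 1
    ring
  rcases (g_le x).lt_or_eq with hg | hg
  · refine habs.neg.congr' ?_
    have hc : 0 < x * (1 - g x) := mul_pos hx (sub_pos.2 hg)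
    filter_upwards [eventually_gt_atTop 0, eventually_gt_atTop (1 / (x * (1 - g x)))] with t ht ht2
    obtain ⟨q, p, hs, hqt, hpt, hq0, hp0, hp2, hq⟩ := key t ht
    have : P t < 0 := by
      by_contra hn
      have := time_neg hs ht hq hq0 (hqt ▸ hx) hp2 (by rw [hpt]; linarith)
      rw [div_lt_iff₀ hc] at ht2
      rw [hqt] at this
      linarith
    rw [abs_of_neg this, neg_neg]
  · rw [hg] at habs ⊢
    simp only [sub_self, mul_zero, Real.sqrt_zero, neg_zero] at habs ⊢
    exact (tendsto_zero_iff_abs_tendsto_zero _).2 habs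

lemma g_even (x : ℝ) : g (-x) = g x := by simp [g]

/-- Time asymptotics: for every `x ≠ 0`, `u(t,x) → -sgn(x) √(2(1 - g(x)))` as `t → +∞`;
explicitly this limit equals `-sgn(x) √2 (1-x²)²` for `|x| ≤ 1` and `0` for `|x| > 1`. -/
theorem stmt_16 (F : ℝ → ℝ → ℝ → ℝ × ℝ) (hF : IsHSFlow F)
    (Δ : ℝ → ℝ → ℝ × ℝ) (hΔ : IsDeltaMap F Δ) :
    ∀ x : ℝ, x ≠ 0 →
      Tendsto (fun t => usol F Δ t x) atTop
        (𝓝 (-(Real.sign x) * Real.sqrt (2 * (1 - g x)))) ∧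
      (|x| ≤ 1 →
        -(Real.sign x) * Real.sqrt (2 * (1 - g x))
          = -(Real.sign x) * Real.sqrt 2 * (1 - x ^ 2) ^ 2) ∧
      (1 < |x| → -(Real.sign x) * Real.sqrt (2 * (1 - g x)) = 0) := by
  intro x hx
  refine ⟨?_, ?_, ?_⟩
  · rcases lt_or_gt_of_ne hx with h | h
    · have := (main_pos F hF Δ hΔ (-x) (by linarith)).neg
      rw [g_even, neg_neg] at this
      rw [Real.sign_of_neg h, neg_neg, one_mul]
      refine this.congr fun t => ?_
      simp [usol, h, h.not_gt]
    · have := main_pos F hF Δ hΔ x h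
      rw [Real.sign_of_pos h, neg_one_mul]
      refine this.congr fun t => ?_
      simp [usol, h]
  · intro h
    have e : 2 * (1 - g x) = 2 * ((1 - x ^ 2) ^ 2) ^ 2 := by
      simp only [g, if_pos h]; ring
    rw [e, Real.sqrt_mul (by norm_num), Real.sqrt_sq (by positivity)]
    ring
  · intro h
    simp [g, not_le.2 h]
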